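/- arXiv:1305.7473 — 4 statements merged into one kernel-verified Lean document; each statement's English description precedes it below -/
import Mathlib

section
/- For every real number k ≥ 2, the supremum of χ*(G) over all finite loopless directed graphs G with ψ_d*(G) ≤ k equals k^k/(k−1)^{k−1}: every such G satisfies χ*(G) ≤ k^k/(k−1)^{k−1}, and for every ε > 0 there exists such a G with χ*(G) > k^k/(k−1)^{k−1} − ε. -/
open Classical

/-- The underlying undirected simple graph of a digraph given by an arc relation `D`. -/
def underlying {V : Type*} (D : V → V → Prop) : SimpleGraph V := SimpleGraph.fromRel D

/-- `A` is an independent set of the simple graph `G`. -/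
def IsIndepF {V : Type*} (G : SimpleGraph V) (A : Finset V) : Prop :=
  ∀ u ∈ A, ∀ v ∈ A, ¬ G.Adj u v

/-- A fractional coloring of `G`: nonnegative weights on the independent sets of `G` such
that the sets containing any fixed vertex have total weight at least `1`. -/
structure FracColoring {V : Type*} [Fintype V] (G : SimpleGraph V) where
  x : Finset V → ℝ
  nonneg : ∀ A, 0 ≤ x A
  supp : ∀ A, x A ≠ 0 → IsIndepF G A
  cover : ∀ v : V, 1 ≤ ∑ A : Finset V, if v ∈ A then x A else 0

/-- The total weight of a fractional coloring. -/
noncomputable def totalWeight {V : Type*} [Fintype V] {G : SimpleGraph V}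
    (f : FracColoring G) : ℝ :=
  ∑ A : Finset V, f.x A

/-- The fractional chromatic number `χ*(G)`: the minimum total weight of a fractional
coloring of `G`. -/
noncomputable def fracChrom {V : Type*} [Fintype V] (G : SimpleGraph V) : ℝ :=
  sInf {w : ℝ | ∃ f : FracColoring G, w = totalWeight f}

/-- The local weight of a fractional coloring of a digraph `D`:
`1` plus the maximum over vertices `v` of the total weight of the independent sets meeting
the out-neighborhood of `v`. -/
noncomputable def localWeight {V : Type*} [Fintype V] (D : V → V → Prop)
    (f : FracColoring (underlying D)) : ℝ :=
  1 + ⨆ v : V, ∑ A : Finset V, if ∃ u ∈ A, D v u then f.x A else 0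

/-- The fractional directed local chromatic number `ψ_d*(D)`: the minimum local weight of a
fractional coloring of `D`. -/
noncomputable def fracDirLocal {V : Type*} [Fintype V] (D : V → V → Prop) : ℝ :=
  sInf {w : ℝ | ∃ f : FracColoring (underlying D), w = localWeight D f}

/-! **Upper bound.** Given a fractional coloring of local weight `w` and `0 < q < 1`, discard each
color class `A` independently with probability `q ^ f.x A`, and keep the vertices that have a
surviving color while their out-neighbors have none. The kept vertices form an independent set,
and each vertex is kept with probability at least `(1 - q) * q ^ (w - 1)`, so `χ*` is at most the
inverse of this number, which for `w = p + 1` and `q = p / (p + 1)` is `(p + 1) ^ (p + 1) / p ^ p`.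

**Lower bound.** Take as vertices the pairs of an injective `s`-tuple `a` and a `t`-tuple `b`
disjoint from it, with an arc to every pair whose `a` uses only entries of `b`. Coloring a pair by
the entries of `a`, with weight `1 / s` each, gives local weight at most `1 + t / s`. The tuples
`a` occurring in an independent set avoid the shadow of the tuples `b` occurring in it. If the
tuples outside the set of these `a` have density `q`, a Kruskal–Katona argument bounds the density
of the `b` by `q ^ (t / s)`, so the independent set has density at most the maximum of
`(1 - q) * q ^ (t / s)`: the same function as in the upper bound. -/

section Digraph

variable {V W : Type*} {D : V → V → Prop} {D' : W → W → Prop} {A : Finset V}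

lemma isIndepF_underlying (hA : ∀ u ∈ A, ∀ v ∈ A, ¬ D u v) : IsIndepF (underlying D) A :=
  fun u hu v hv huv => ((SimpleGraph.fromRel_adj D u v).1 huv).2.elim (hA u hu v hv) (hA v hv u hu)

lemma not_rel_of_isIndepF_underlying (hD : ∀ v, ¬ D v v) (hA : IsIndepF (underlying D) A) {u v : V}
    (hu : u ∈ A) (hv : v ∈ A) : ¬ D u v := fun huv =>
  hA u hu v hv ((SimpleGraph.fromRel_adj D u v).2 ⟨fun h => hD u (by rwa [← h] at huv), Or.inl huv⟩)

/-- A homomorphism into a loopless digraph, as a homomorphism of underlying graphs. -/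
def underlyingHom (hD : ∀ v, ¬ D v v) (φ : W → V) (hφ : ∀ u v, D' u v → D (φ u) (φ v)) :
    underlying D' →g underlying D where
  toFun := φ
  map_rel' {u v} huv := by
    have hadj : D (φ u) (φ v) ∨ D (φ v) (φ u) :=
      ((SimpleGraph.fromRel_adj D' u v).1 huv).2.imp (hφ u v) (hφ v u)
    refine (SimpleGraph.fromRel_adj D _ _).2 ⟨fun h => ?_, hadj⟩
    rw [h, or_self] at hadj
    exact hD _ hadj

end Digraph

section FractionalColoring

variable {V W ι : Type*} [Fintype V] [Fintype W] [Fintype ι] {G : SimpleGraph V}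

namespace FracColoring

/-- The fractional coloring in which the color `i` has weight `w i` and color class `I i`. The
classes need not be distinct: a set `A` receives the weights of all colors `i` with `I i = A`. -/
noncomputable def ofFamily (w : ι → ℝ) (I : ι → Finset V) (hw : ∀ i, 0 ≤ w i)
    (hI : ∀ i, w i ≠ 0 → IsIndepF G (I i)) (hcover : ∀ v, 1 ≤ ∑ i with v ∈ I i, w i) :
    FracColoring G where
  x A := ∑ i with I i = A, w i
  nonneg A := Finset.sum_nonneg fun i _ => hw i
  supp A hA := by
    obtain ⟨i, hi, hwi⟩ := Finset.exists_ne_zero_of_sum_ne_zero hA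
    exact (Finset.mem_filter.1 hi).2 ▸ hI i hwi
  cover v := by
    rw [← Finset.sum_filter, Finset.sum_fiberwise_eq_sum_filter]
    simpa only [Finset.mem_filter_univ] using hcover v

lemma sum_filter_ofFamily_x {w : ι → ℝ} {I : ι → Finset V} (hw : ∀ i, 0 ≤ w i)
    (hI : ∀ i, w i ≠ 0 → IsIndepF G (I i)) (hcover : ∀ v, 1 ≤ ∑ i with v ∈ I i, w i)
    (P : Finset V → Prop) [DecidablePred P] :
    ∑ A with P A, (ofFamily w I hw hI hcover).x A = ∑ i with P (I i), w i := by
  simp only [ofFamily, Finset.sum_fiberwise_eq_sum_filter, Finset.mem_filter_univ]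

lemma totalWeight_ofFamily {w : ι → ℝ} {I : ι → Finset V} (hw : ∀ i, 0 ≤ w i)
    (hI : ∀ i, w i ≠ 0 → IsIndepF G (I i)) (hcover : ∀ v, 1 ≤ ∑ i with v ∈ I i, w i) :
    totalWeight (ofFamily w I hw hI hcover) = ∑ i, w i :=
  Finset.sum_fiberwise Finset.univ I w

instance : Nonempty (FracColoring G) :=
  ⟨ofFamily (fun _ : V => 1) (fun v => {v}) (fun _ => zero_le_one)
    (fun v _ => by simp [IsIndepF])
    (fun v => by simp only [Finset.mem_singleton, Finset.sum_filter, Finset.sum_ite_eq,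
      Finset.mem_univ, if_true, le_refl])⟩

lemma one_le_sum_filter_mem (f : FracColoring G) (v : V) : 1 ≤ ∑ A with v ∈ A, f.x A := by
  rw [Finset.sum_filter]
  exact f.cover v

/-- The pullback of a fractional coloring along a graph homomorphism. -/
noncomputable def comap {H : SimpleGraph W} (φ : H →g G) (f : FracColoring G) : FracColoring H :=
  ofFamily f.x (fun A => {w | φ w ∈ A}) f.nonneg
    (fun A hxA u hu v hv huv => f.supp A hxA (φ u) (Finset.mem_filter.1 hu).2 (φ v)
      (Finset.mem_filter.1 hv).2 (φ.map_adj huv))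
    (fun v => by simpa only [Finset.mem_filter_univ] using f.one_le_sum_filter_mem (φ v))

lemma sum_filter_comap_x {H : SimpleGraph W} (φ : H →g G) (f : FracColoring G)
    (P : Finset W → Prop) [DecidablePred P] :
    ∑ A with P A, (f.comap φ).x A = ∑ A : Finset V with P {w | φ w ∈ A}, f.x A :=
  sum_filter_ofFamily_x ..

end FracColoring

lemma fracChrom_le_totalWeight (f : FracColoring G) : fracChrom G ≤ totalWeight f := by
  refine csInf_le ⟨0, ?_⟩ ⟨f, rfl⟩
  rintro _ ⟨g, rfl⟩
  exact Finset.sum_nonneg fun A _ => g.nonneg A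

lemma le_fracChrom {c : ℝ} (h : ∀ f : FracColoring G, c ≤ totalWeight f) : c ≤ fracChrom G := by
  refine le_csInf ⟨_, Classical.arbitrary (FracColoring G), rfl⟩ ?_
  rintro _ ⟨f, rfl⟩
  exact h f

lemma fracChrom_le_sum_div {w : ι → ℝ} {I : ι → Finset V} {c : ℝ} (hc : 0 < c)
    (hw : ∀ i, 0 ≤ w i) (hI : ∀ i, w i ≠ 0 → IsIndepF G (I i))
    (hcover : ∀ v, c ≤ ∑ i with v ∈ I i, w i) :
    fracChrom G ≤ (∑ i, w i) / c := by
  have hcover' (v : V) : 1 ≤ ∑ i with v ∈ I i, w i / c := by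
    rw [← Finset.sum_div, one_le_div hc]
    exact hcover v
  rw [Finset.sum_div,
    ← FracColoring.totalWeight_ofFamily (fun i => div_nonneg (hw i) hc.le)
      (fun i hi => hI i (div_ne_zero_iff.1 hi).1) hcover']
  exact fracChrom_le_totalWeight _

/-- Weak linear programming duality: `y` is a fractional clique. -/
lemma sum_le_fracChrom {y : V → ℝ} (hy : ∀ v, 0 ≤ y v)
    (hA : ∀ A, IsIndepF G A → ∑ v ∈ A, y v ≤ 1) : ∑ v, y v ≤ fracChrom G := by
  refine le_fracChrom fun f => ?_
  calc ∑ v, y v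
    _ ≤ ∑ v, y v * ∑ A with v ∈ A, f.x A :=
      Finset.sum_le_sum fun v _ => le_mul_of_one_le_right (hy v) (f.one_le_sum_filter_mem v)
    _ = ∑ A, f.x A * ∑ v ∈ A, y v := by
      simp_rw [Finset.mul_sum, mul_comm (y _)]
      exact Finset.sum_comm' (by simp)
    _ ≤ ∑ A, f.x A := Finset.sum_le_sum fun A _ => by
      by_cases hxA : f.x A = 0
      · simp [hxA]
      · exact mul_le_of_le_one_right (f.nonneg A) (hA A (f.supp A hxA))

lemma card_div_le_fracChrom {a : ℝ} (ha : 0 < a) (hA : ∀ A, IsIndepF G A → (A.card : ℝ) ≤ a) :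
    Fintype.card V / a ≤ fracChrom G := by
  have h := sum_le_fracChrom (G := G) (y := fun _ => a⁻¹) (fun _ => by positivity) fun A hAi => by
    rw [Finset.sum_const, nsmul_eq_mul, ← div_eq_mul_inv, div_le_one ha]
    exact hA A hAi
  rwa [Finset.sum_const, nsmul_eq_mul, ← div_eq_mul_inv, Finset.card_univ] at h

lemma fracChrom_le_of_hom {H : SimpleGraph W} (φ : H →g G) : fracChrom H ≤ fracChrom G :=
  le_fracChrom fun f =>
    (fracChrom_le_totalWeight (f.comap φ)).trans_eq (FracColoring.totalWeight_ofFamily ..)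

variable {D : V → V → Prop} {D' : W → W → Prop}

lemma one_add_sum_filter_le_localWeight (f : FracColoring (underlying D)) (v : V) :
    1 + ∑ A with ∃ u ∈ A, D v u, f.x A ≤ localWeight D f := by
  rw [Finset.sum_filter]
  exact add_le_add_right (le_ciSup
    (f := fun v => ∑ A, if ∃ u ∈ A, D v u then f.x A else 0) (Set.finite_range _).bddAbove v) 1

lemma localWeight_le {f : FracColoring (underlying D)} {c : ℝ} (hc : 1 ≤ c)
    (h : ∀ v, 1 + ∑ A with ∃ u ∈ A, D v u, f.x A ≤ c) : localWeight D f ≤ c := by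
  rw [localWeight, ← le_sub_iff_add_le']
  refine Real.iSup_le (fun v => ?_) (sub_nonneg.2 hc)
  rw [← Finset.sum_filter, le_sub_iff_add_le']
  exact h v

lemma one_le_localWeight (f : FracColoring (underlying D)) : 1 ≤ localWeight D f :=
  le_add_of_nonneg_right <| Real.iSup_nonneg fun v => by
    rw [← Finset.sum_filter]
    exact Finset.sum_nonneg fun A _ => f.nonneg A

lemma fracDirLocal_le_localWeight (f : FracColoring (underlying D)) :
    fracDirLocal D ≤ localWeight D f := by
  refine csInf_le ⟨1, ?_⟩ ⟨f, rfl⟩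
  rintro _ ⟨g, rfl⟩
  exact one_le_localWeight g

lemma le_fracDirLocal {c : ℝ} (h : ∀ f : FracColoring (underlying D), c ≤ localWeight D f) :
    c ≤ fracDirLocal D := by
  refine le_csInf ⟨_, Classical.arbitrary (FracColoring (underlying D)), rfl⟩ ?_
  rintro _ ⟨f, rfl⟩
  exact h f

lemma fracDirLocal_le_of_hom (hD : ∀ v, ¬ D v v) (φ : W → V)
    (hφ : ∀ u v, D' u v → D (φ u) (φ v)) : fracDirLocal D' ≤ fracDirLocal D := by
  refine le_fracDirLocal fun f =>
    (fracDirLocal_le_localWeight (f.comap (underlyingHom hD φ hφ))).trans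
      (localWeight_le (one_le_localWeight f) fun w => ?_)
  refine le_trans ?_ (one_add_sum_filter_le_localWeight f (φ w))
  rw [FracColoring.sum_filter_comap_x]
  refine add_le_add_right (Finset.sum_le_sum_of_subset_of_nonneg
    (Finset.monotone_filter_right _ ?_) fun A _ _ => f.nonneg A) 1
  rintro A - ⟨u, hu, hwu⟩
  exact ⟨φ u, (Finset.mem_filter.1 hu).2, hφ w u hwu⟩

lemma exists_fin_digraph (hD : ∀ v, ¬ D v v) :
    ∃ (n : ℕ) (D' : Fin n → Fin n → Prop), (∀ v, ¬ D' v v) ∧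
      fracDirLocal D' ≤ fracDirLocal D ∧ fracChrom (underlying D) ≤ fracChrom (underlying D') := by
  let e := Fintype.equivFin V
  refine ⟨Fintype.card V, fun u v => D (e.symm u) (e.symm v), fun v => hD _,
    fracDirLocal_le_of_hom hD e.symm fun u v huv => huv,
    fracChrom_le_of_hom (underlyingHom (fun v => hD _) e fun u v huv => ?_)⟩
  simpa only [Equiv.symm_apply_apply] using huv

end FractionalColoring

section RandomSubset

variable {ι R : Type*} [Fintype ι] [DecidableEq ι] [CommRing R]

/-- The probability that a random subset of `ι` equals `S`, when each `i` is left out with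
probability `r i`, independently. -/
def subsetProb (r : ι → R) (S : Finset ι) : R := (∏ i ∈ S, (1 - r i)) * ∏ i ∈ Sᶜ, r i

lemma sum_subsetProb_disjoint (r : ι → R) (T : Finset ι) :
    ∑ S with Disjoint S T, subsetProb r S = ∏ i ∈ T, r i := by
  have hvanish (S : Finset ι) : ∏ i ∈ S, (if i ∈ T then 0 else 1 - r i) =
      if Disjoint S T then ∏ i ∈ S, (1 - r i) else 0 := by
    split_ifs with hST
    · exact Finset.prod_congr rfl fun i hi => if_neg (Finset.disjoint_left.1 hST hi)
    · obtain ⟨i, hiS, hiT⟩ := Finset.not_disjoint_iff.1 hST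
      exact Finset.prod_eq_zero hiS (if_pos hiT)
  calc ∑ S with Disjoint S T, subsetProb r S
    _ = ∑ S, (∏ i ∈ S, (if i ∈ T then 0 else 1 - r i)) * ∏ i ∈ Sᶜ, r i := by
      simp only [Finset.sum_filter, hvanish, ite_mul, zero_mul, subsetProb]
    _ = ∏ i, ((if i ∈ T then 0 else 1 - r i) + r i) := by
      rw [Finset.prod_add, Finset.powerset_univ]
      rfl
    _ = ∏ i ∈ T, r i := by
      simp only [ite_add, zero_add, sub_add_cancel, Finset.prod_ite_mem, Finset.univ_inter]

lemma sum_subsetProb (r : ι → R) : ∑ S, subsetProb r S = 1 := by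
  simpa using sum_subsetProb_disjoint r ∅

lemma sum_subsetProb_hit_avoid (r : ι → R) {X T : Finset ι} (hXT : Disjoint X T) :
    ∑ S with ¬ Disjoint S X ∧ Disjoint S T, subsetProb r S =
      (1 - ∏ i ∈ X, r i) * ∏ i ∈ T, r i := by
  have hsplit := Finset.sum_filter_add_sum_filter_not
    ({S | Disjoint S T} : Finset (Finset ι)) (Disjoint · X) (subsetProb r)
  simp only [Finset.filter_filter, and_comm (a := Disjoint _ T), ← Finset.disjoint_union_right,
    sum_subsetProb_disjoint, Finset.prod_union hXT] at hsplit
  linear_combination hsplit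

end RandomSubset

lemma subsetProb_nonneg {ι : Type*} [Fintype ι] [DecidableEq ι] {r : ι → ℝ} (hr₀ : ∀ i, 0 ≤ r i)
    (hr₁ : ∀ i, r i ≤ 1) (S : Finset ι) : 0 ≤ subsetProb r S :=
  mul_nonneg (Finset.prod_nonneg fun i _ => sub_nonneg.2 (hr₁ i))
    (Finset.prod_nonneg fun i _ => hr₀ i)

section UpperBound

variable {V : Type*} [Fintype V] {D : V → V → Prop}

namespace FracColoring

/-- The colors of the vertex `v`: the color classes of positive weight containing `v`. -/
noncomputable def colors {G : SimpleGraph V} (f : FracColoring G) (v : V) : Finset (Finset V) :=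
  {A | f.x A ≠ 0 ∧ v ∈ A}

/-- The colors occurring on the out-neighbors of the vertex `v`. -/
noncomputable def outColors (f : FracColoring (underlying D)) (v : V) : Finset (Finset V) :=
  {A | f.x A ≠ 0 ∧ ∃ u ∈ A, D v u}

lemma one_le_sum_colors {G : SimpleGraph V} (f : FracColoring G) (v : V) :
    1 ≤ ∑ A ∈ f.colors v, f.x A := by
  rw [colors, ← Finset.filter_filter, Finset.filter_comm, Finset.sum_filter_ne_zero]
  exact f.one_le_sum_filter_mem v

lemma sum_outColors_le (f : FracColoring (underlying D)) (v : V) :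
    ∑ A ∈ f.outColors v, f.x A ≤ localWeight D f - 1 := by
  rw [outColors, ← Finset.filter_filter, Finset.filter_comm, Finset.sum_filter_ne_zero,
    le_sub_iff_add_le']
  exact one_add_sum_filter_le_localWeight f v

lemma disjoint_colors_outColors (hD : ∀ v, ¬ D v v) (f : FracColoring (underlying D)) (v : V) :
    Disjoint (f.colors v) (f.outColors v) := by
  refine Finset.disjoint_filter.2 ?_
  rintro A - ⟨hxA, hvA⟩ ⟨-, u, huA, hvu⟩
  exact not_rel_of_isIndepF_underlying hD (f.supp A hxA) hvA huA hvu

/-- The vertices that have a color in `S` while none of their out-neighbors has one. -/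
noncomputable def sampledSet (f : FracColoring (underlying D)) (S : Finset (Finset V)) :
    Finset V :=
  {v | ¬ Disjoint S (f.colors v) ∧ Disjoint S (f.outColors v)}

lemma isIndepF_sampledSet (f : FracColoring (underlying D)) (S : Finset (Finset V)) :
    IsIndepF (underlying D) (f.sampledSet S) := by
  refine isIndepF_underlying fun u hu v hv huv => ?_
  obtain ⟨A, hAS, hAv⟩ := Finset.not_disjoint_iff.1 (Finset.mem_filter.1 hv).2.1
  obtain ⟨hxA, hvA⟩ := (Finset.mem_filter.1 hAv).2
  have hAu : A ∈ f.outColors u := Finset.mem_filter.2 ⟨Finset.mem_univ A, hxA, v, hvA, huv⟩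
  exact Finset.disjoint_left.1 (Finset.mem_filter.1 hu).2.2 hAS hAu

lemma le_sum_subsetProb_mem_sampledSet (hD : ∀ v, ¬ D v v) (f : FracColoring (underlying D))
    {q : ℝ} (hq₀ : 0 < q) (hq₁ : q < 1) (v : V) :
    (1 - q) * q ^ (localWeight D f - 1) ≤
      ∑ S with v ∈ f.sampledSet S, subsetProb (fun A => q ^ f.x A) S := by
  have hhit : q ^ (∑ A ∈ f.colors v, f.x A) ≤ q := by
    simpa using Real.rpow_le_rpow_of_exponent_ge hq₀ hq₁.le (f.one_le_sum_colors v)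
  have havoid : q ^ (localWeight D f - 1) ≤ q ^ (∑ A ∈ f.outColors v, f.x A) :=
    Real.rpow_le_rpow_of_exponent_ge hq₀ hq₁.le (f.sum_outColors_le v)
  simp only [sampledSet, Finset.mem_filter_univ]
  rw [sum_subsetProb_hit_avoid _ (f.disjoint_colors_outColors hD v),
    ← Real.rpow_sum_of_pos hq₀, ← Real.rpow_sum_of_pos hq₀]
  gcongr
  linarith

end FracColoring

lemma fracChrom_le_inv_of_localWeight (hD : ∀ v, ¬ D v v) (f : FracColoring (underlying D))
    {q : ℝ} (hq₀ : 0 < q) (hq₁ : q < 1) :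
    fracChrom (underlying D) ≤ ((1 - q) * q ^ (localWeight D f - 1))⁻¹ := by
  have hprob := subsetProb_nonneg (r := fun A => q ^ f.x A) (fun A => by positivity)
    (fun A => Real.rpow_le_one hq₀.le hq₁.le (f.nonneg A))
  have h := fracChrom_le_sum_div (mul_pos (sub_pos.2 hq₁) (Real.rpow_pos_of_pos hq₀ _)) hprob
    (fun S _ => f.isIndepF_sampledSet S) (f.le_sum_subsetProb_mem_sampledSet hD hq₀ hq₁)
  rwa [sum_subsetProb, one_div] at h

lemma fracChrom_le_inv_of_fracDirLocal_le (hD : ∀ v, ¬ D v v) {w : ℝ} (hw : fracDirLocal D ≤ w)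
    {q : ℝ} (hq₀ : 0 < q) (hq₁ : q < 1) :
    fracChrom (underlying D) ≤ ((1 - q) * q ^ (w - 1))⁻¹ := by
  have hcont : ContinuousAt (fun x : ℝ => ((1 - q) * q ^ (x - 1))⁻¹) w :=
    ((continuousAt_const.rpow (by fun_prop) (Or.inl hq₀.ne')).const_mul _).inv₀
      (mul_pos (sub_pos.2 hq₁) (Real.rpow_pos_of_pos hq₀ _)).ne'
  refine ge_of_tendsto (hcont.tendsto.mono_left (nhdsWithin_le_nhds (s := Set.Ioi w))) ?_
  filter_upwards [self_mem_nhdsWithin] with x hx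
  obtain ⟨f, hf⟩ : ∃ f : FracColoring (underlying D), localWeight D f < x := by
    by_contra! h
    exact (hw.trans_lt hx).not_ge (le_fracDirLocal h)
  refine (fracChrom_le_inv_of_localWeight hD f hq₀ hq₁).trans ?_
  have hexp : q ^ (x - 1) ≤ q ^ (localWeight D f - 1) :=
    Real.rpow_le_rpow_of_exponent_ge hq₀ hq₁.le (by linarith)
  have := sub_pos.2 hq₁
  gcongr

lemma fracChrom_le_of_fracDirLocal_le (hD : ∀ v, ¬ D v v) {p : ℝ} (hp : 0 < p)
    (h : fracDirLocal D ≤ p + 1) :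
    fracChrom (underlying D) ≤ (p + 1) ^ (p + 1) / p ^ p := by
  refine (fracChrom_le_inv_of_fracDirLocal_le hD h (q := p / (p + 1)) (by positivity)
    ((div_lt_one (by positivity)).2 (lt_add_one p))).trans_eq ?_
  rw [add_sub_cancel_right, Real.div_rpow hp.le (by positivity), one_sub_div (by positivity),
    add_sub_cancel_left, Real.rpow_add_one (by positivity)]
  field_simp

end UpperBound

lemma one_sub_mul_rpow_le {p q : ℝ} (hp : 0 < p) (hq₀ : 0 ≤ q) (hq₁ : q ≤ 1) :
    (1 - q) * q ^ p ≤ p ^ p / (p + 1) ^ (p + 1) := by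
  have hp₁ : 0 < p + 1 := by linarith
  have hq₁' : 0 ≤ 1 - q := sub_nonneg.2 hq₁
  have hqp : 0 ≤ q / p := div_nonneg hq₀ hp.le
  have hamgm : (1 - q) ^ (1 / (p + 1)) * (q / p) ^ (p / (p + 1)) ≤ 1 / (p + 1) := by
    refine (Real.geom_mean_le_arith_mean2_weighted (by positivity) (by positivity) hq₁' hqp
      (by field_simp; ring)).trans_eq ?_
    field_simp
    ring
  have hpow := Real.rpow_le_rpow (by positivity) hamgm hp₁.le
  rw [Real.mul_rpow (by positivity) (by positivity), ← Real.rpow_mul hq₁', ← Real.rpow_mul hqp,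
    one_div_mul_cancel hp₁.ne', div_mul_cancel₀ _ hp₁.ne', Real.rpow_one, Real.div_rpow hq₀ hp.le,
    Real.div_rpow zero_le_one hp₁.le, Real.one_rpow, ← mul_div_assoc,
    div_le_iff₀ (by positivity)] at hpow
  rwa [div_eq_mul_one_div, mul_comm (p ^ p)]

section TupleShadow

lemma sum_pow_le_sum_pow_mul {ι : Type*} {s : Finset ι} {f g : ι → ℕ} {c n : ℕ} (hn : n ≠ 0)
    (h : ∀ i ∈ s, f i ^ n ≤ g i ^ n * c) : (∑ i ∈ s, f i) ^ n ≤ (∑ i ∈ s, g i) ^ n * c := by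
  obtain ⟨r, hr⟩ : ∃ r : NNReal, r ^ n = c := ⟨_, NNReal.rpow_inv_natCast_pow c hn⟩
  have hroot (i : ι) (hi : i ∈ s) : (f i : NNReal) ≤ g i * r := by
    rw [← pow_le_pow_iff_left₀ zero_le zero_le hn, mul_pow, hr]
    exact_mod_cast h i hi
  have hsum : ∑ i ∈ s, (f i : NNReal) ≤ (∑ i ∈ s, (g i : NNReal)) * r := by
    rw [Finset.sum_mul]
    exact Finset.sum_le_sum hroot
  have hpow := pow_le_pow_left₀ zero_le hsum n
  rw [mul_pow, hr] at hpow
  exact_mod_cast hpow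

lemma pow_succ_le_pow_succ_mul_pow_sub {a b c s t : ℕ} (hst : s < t) (hb : a ^ s ≤ b ^ t)
    (hc : a ^ (s + 1) ≤ c ^ t) : a ^ (s + 1) ≤ b ^ (s + 1) * c ^ (t - s) := by
  obtain ⟨d, rfl⟩ := Nat.exists_eq_add_of_le hst.le
  rw [Nat.add_sub_cancel_left, ← Nat.pow_le_pow_iff_left (n := s + d) (by omega)]
  calc (a ^ (s + 1)) ^ (s + d)
    _ = (a ^ s) ^ (s + 1) * (a ^ (s + 1)) ^ d := by ring
    _ ≤ (b ^ (s + d)) ^ (s + 1) * (c ^ (s + d)) ^ d := by gcongr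
    _ = (b ^ (s + 1) * c ^ d) ^ (s + d) := by ring

lemma le_pow_mul_rpow_div {b m q : ℝ} {s t : ℕ} (hs : s ≠ 0) (hm : 0 ≤ m) (hq : 0 ≤ q)
    (h : b ^ s ≤ (m ^ s * q) ^ t) : b ≤ m ^ t * q ^ (t / s : ℝ) := by
  have hroot : (q ^ (t / s : ℝ)) ^ s = q ^ t := by
    rw [← Real.rpow_mul_natCast hq, div_mul_cancel₀ _ (by positivity), Real.rpow_natCast]
  refine le_of_pow_le_pow_left₀ hs (by positivity) (h.trans_eq ?_)
  rw [mul_pow, mul_pow, hroot]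
  ring

variable {α : Type*}

/-- The tails of the tuples in `B` whose first entry is `x`. -/
noncomputable def tupleLink {n : ℕ} (B : Finset (Fin (n + 1) → α)) (x : α) :
    Finset (Fin n → α) :=
  B.preimage (fun b => Fin.cons x b) (Fin.cons_right_injective (α := fun _ => α) x).injOn

lemma sum_card_tupleLink {n : ℕ} {B : Finset (Fin (n + 1) → α)} {X : Finset α}
    (hX : B.image (· 0) ⊆ X) : ∑ x ∈ X, (tupleLink B x).card = B.card := by
  rw [Finset.card_eq_sum_card_fiberwise fun b hb => hX (Finset.mem_image_of_mem _ hb)]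
  refine Finset.sum_congr rfl fun x _ => ?_
  rw [tupleLink, Finset.card_preimage]
  congr 1
  refine Finset.filter_congr fun b _ => ⟨?_, fun hb => ⟨Fin.tail b, hb ▸ Fin.cons_self_tail b⟩⟩
  rintro ⟨a, rfl⟩
  rfl

/-- A Kruskal–Katona theorem for tuples. Inductively, the link of `B` at `x` is bounded both in
terms of the link of `S` at `x` and in terms of `S` itself; a weighted geometric mean of the two
bounds is linear in the size of the link of `S`, so it can be summed over `x`. -/
lemma card_pow_le_card_pow_of_range_subset {s t : ℕ} (hst : s ≤ t) {S : Finset (Fin s → α)}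
    {B : Finset (Fin t → α)} (hB : B.Nonempty)
    (hS : ∀ b ∈ B, ∀ a : Fin s → α, Set.range a ⊆ Set.range b → a ∈ S) :
    B.card ^ s ≤ S.card ^ t := by
  induction t generalizing s with
  | zero =>
    obtain rfl := Nat.le_zero.1 hst
    simp
  | succ t ih =>
    obtain rfl | hst := hst.eq_or_lt
    · exact Nat.pow_le_pow_left (Finset.card_le_card fun b hb => hS b hb b subset_rfl) _
    obtain _ | s := s
    · obtain ⟨b, hb⟩ := hB
      have hSne : S.Nonempty := ⟨Fin.elim0, hS b hb _ (by simp)⟩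
      simpa using Nat.one_le_pow _ _ hSne.card_pos
    have hlink (x : α) :
        (tupleLink B x).card ^ (s + 1) ≤ (tupleLink S x).card ^ (s + 1) * S.card ^ (t - s) := by
      obtain hx | hx := (tupleLink B x).eq_empty_or_nonempty
      · simp [hx]
      have hlinks : (tupleLink B x).card ^ s ≤ (tupleLink S x).card ^ t :=
        ih (by omega) hx fun b hb a hab => by
          refine Finset.mem_preimage.2 (hS _ (Finset.mem_preimage.1 hb) _ ?_)
          rw [Fin.range_cons, Fin.range_cons]
          exact Set.insert_subset_insert hab
      have hshadow : (tupleLink B x).card ^ (s + 1) ≤ S.card ^ t :=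
        ih (by omega) hx fun b hb a hab => by
          refine hS _ (Finset.mem_preimage.1 hb) a (hab.trans ?_)
          rw [Fin.range_cons]
          exact Set.subset_insert _ _
      exact pow_succ_le_pow_succ_mul_pow_sub (by omega) hlinks hshadow
    let X := B.image (· 0) ∪ S.image (· 0)
    calc B.card ^ (s + 1)
      _ = (∑ x ∈ X, (tupleLink B x).card) ^ (s + 1) := by
        rw [sum_card_tupleLink Finset.subset_union_left]
      _ ≤ (∑ x ∈ X, (tupleLink S x).card) ^ (s + 1) * S.card ^ (t - s) :=
        sum_pow_le_sum_pow_mul s.succ_ne_zero fun x _ => hlink x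
      _ = S.card ^ (t + 1) := by
        rw [sum_card_tupleLink Finset.subset_union_right, ← pow_add]
        congr 1
        omega

lemma card_mul_card_le_of_not_range_subset [Fintype α] {s t : ℕ} (hs : 0 < s) (hst : s ≤ t)
    {F : Finset (Fin s → α)} {B : Finset (Fin t → α)}
    (hFB : ∀ a ∈ F, ∀ b ∈ B, ¬ Set.range a ⊆ Set.range b) {p : ℝ} (hp : p = t / s) :
    (F.card * B.card : ℝ) ≤ Fintype.card α ^ (s + t) * (p ^ p / (p + 1) ^ (p + 1)) := by
  have hp₀ : 0 < p := by rw [hp]; have := hs.trans_le hst; positivity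
  obtain rfl | hB := B.eq_empty_or_nonempty
  · simp only [Finset.card_empty, Nat.cast_zero, mul_zero]
    positivity
  have : Nonempty α := ⟨hB.choose ⟨0, hs.trans_le hst⟩⟩
  set m : ℝ := (Fintype.card α : ℝ)
  have hm : 0 < m := Nat.cast_pos.2 Fintype.card_pos
  obtain ⟨q, hq⟩ : ∃ q, (Fᶜ.card : ℝ) = m ^ s * q := ⟨Fᶜ.card / m ^ s, by field_simp⟩
  have hF : (F.card : ℝ) = m ^ s * (1 - q) := by
    have hcompl : (F.card + Fᶜ.card : ℝ) = m ^ s := by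
      rw [← Nat.cast_add, F.card_add_card_compl, Fintype.card_fun, Fintype.card_fin, Nat.cast_pow]
    linear_combination hcompl - hq
  have hq₀ : 0 ≤ q := nonneg_of_mul_nonneg_right (hq ▸ Nat.cast_nonneg _) (by positivity)
  have hq₁ : q ≤ 1 := sub_nonneg.1 <|
    nonneg_of_mul_nonneg_right (hF ▸ Nat.cast_nonneg _) (by positivity)
  have hBq : (B.card : ℝ) ≤ m ^ t * q ^ p := by
    rw [hp]
    refine le_pow_mul_rpow_div hs.ne' hm.le hq₀ ?_
    rw [← hq]
    exact_mod_cast card_pow_le_card_pow_of_range_subset hst hB fun b hb a hab =>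
      Finset.mem_compl.2 fun ha => hFB a ha b hb hab
  calc (F.card * B.card : ℝ)
    _ ≤ (m ^ s * (1 - q)) * (m ^ t * q ^ p) := by
      rw [hF]
      have := sub_nonneg.2 hq₁
      gcongr
    _ = m ^ (s + t) * ((1 - q) * q ^ p) := by ring
    _ ≤ m ^ (s + t) * (p ^ p / (p + 1) ^ (p + 1)) := by
      gcongr
      exact one_sub_mul_rpow_le hp₀ hq₀ hq₁

end TupleShadow

section TuplePair

/-- The vertices of the extremal digraphs: an `s`-tuple without repetitions together with a
`t`-tuple avoiding its entries. -/
@[ext] structure TuplePair (α : Type*) (s t : ℕ) where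
  head : Fin s → α
  tail : Fin t → α
  head_injective : Function.Injective head
  disjoint_range : Disjoint (Set.range head) (Set.range tail)

variable {α : Type*} {s t : ℕ}

namespace TuplePair

/-- The arcs of the extremal digraphs: the out-neighbors of `v` are the pairs whose `head` uses
only entries of `v.tail`. -/
def Arc (v u : TuplePair α s t) : Prop := Set.range u.head ⊆ Set.range v.tail

lemma not_arc_self (hs : 0 < s) (v : TuplePair α s t) : ¬ Arc v v := fun h =>
  Set.disjoint_left.1 v.disjoint_range ⟨⟨0, hs⟩, rfl⟩ (h ⟨⟨0, hs⟩, rfl⟩)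

/-- A pair consists of an embedding and an arbitrary tuple in the complement of its range. -/
def equivSigma : TuplePair α s t ≃ Σ a : Fin s ↪ α, Fin t → ((Set.range a)ᶜ : Set α) where
  toFun v := ⟨⟨v.head, v.head_injective⟩, fun j =>
    ⟨v.tail j, Set.disjoint_right.1 v.disjoint_range ⟨j, rfl⟩⟩⟩
  invFun w := ⟨w.1, fun j => w.2 j, w.1.injective,
    Set.disjoint_right.2 (by rintro _ ⟨j, rfl⟩; exact (w.2 j).2)⟩

variable [Fintype α]

noncomputable instance : Fintype (TuplePair α s t) := Fintype.ofEquiv _ equivSigma.symm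

lemma card_eq : Fintype.card (TuplePair α s t) =
    (Fintype.card α).descFactorial s * (Fintype.card α - s) ^ t := by
  have hcompl (a : Fin s ↪ α) : Fintype.card ((Set.range a)ᶜ : Set α) = Fintype.card α - s := by
    rw [Fintype.card_compl_set, Set.card_range_of_injective a.injective, Fintype.card_fin]
  rw [Fintype.card_congr equivSigma]
  simp only [Fintype.card_sigma, Fintype.card_fun, hcompl, Fintype.card_fin, Finset.sum_const,
    Finset.card_univ, Fintype.card_embedding_eq, smul_eq_mul]

lemma card_le_of_isIndepF (hs : 0 < s) (hst : s ≤ t) {A : Finset (TuplePair α s t)}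
    (hA : IsIndepF (underlying Arc) A) {p : ℝ} (hp : p = t / s) :
    (A.card : ℝ) ≤ Fintype.card α ^ (s + t) * (p ^ p / (p + 1) ^ (p + 1)) := by
  have hcard : A.card ≤ (A.image head).card * (A.image tail).card := by
    rw [← Finset.card_product]
    exact Finset.card_le_card_of_injOn (fun v => (v.head, v.tail))
      (fun v hv => Finset.mk_mem_product (Finset.mem_image_of_mem _ hv)
        (Finset.mem_image_of_mem _ hv))
      fun u _ v _ huv => TuplePair.ext (Prod.ext_iff.1 huv).1 (Prod.ext_iff.1 huv).2
  refine le_trans (by exact_mod_cast hcard) (card_mul_card_le_of_not_range_subset hs hst ?_ hp)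
  simp only [Finset.forall_mem_image]
  exact fun u hu v hv => not_rel_of_isIndepF_underlying (not_arc_self hs) hA hv hu

/-- The pairs whose `head` has the entry `x`, the color class of the color `x`. -/
noncomputable def colorClass (s t : ℕ) (x : α) : Finset (TuplePair α s t) :=
  {v | x ∈ Finset.univ.image v.head}

lemma isIndepF_colorClass (x : α) : IsIndepF (underlying Arc) (colorClass s t x) := by
  refine isIndepF_underlying fun u hu v hv huv => ?_
  simp only [colorClass, Finset.mem_filter_univ, Finset.mem_image, Finset.mem_univ, true_and]
    at hu hv
  exact Set.disjoint_left.1 u.disjoint_range hu (huv hv)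

lemma fracDirLocal_arc_le (hs : 0 < s) :
    fracDirLocal (Arc (α := α) (s := s) (t := t)) ≤ t / s + 1 := by
  have hs' : (0 : ℝ) < s := by exact_mod_cast hs
  have hcover (v : TuplePair α s t) : 1 ≤ ∑ x with v ∈ colorClass s t x, (s : ℝ)⁻¹ := by
    simp only [colorClass, Finset.mem_filter_univ]
    rw [Finset.filter_univ_mem, Finset.sum_const, Finset.card_image_of_injective _ v.head_injective,
      Finset.card_univ, Fintype.card_fin, nsmul_eq_mul, mul_inv_cancel₀ hs'.ne']
  refine (fracDirLocal_le_localWeight (FracColoring.ofFamily _ _ (fun _ => by positivity)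
    (fun x _ => isIndepF_colorClass x) hcover)).trans
    (localWeight_le (le_add_of_nonneg_left (by positivity)) fun v => ?_)
  have houter : ({x | ∃ u ∈ colorClass s t x, Arc v u} : Finset α) ⊆ Finset.univ.image v.tail := by
    intro x hx
    obtain ⟨u, hu, huv⟩ := (Finset.mem_filter.1 hx).2
    simp only [colorClass, Finset.mem_filter_univ, Finset.mem_image, Finset.mem_univ, true_and]
      at hu ⊢
    exact huv hu
  have hcard := (Finset.card_le_card houter).trans Finset.card_image_le
  rw [Finset.card_univ, Fintype.card_fin] at hcard
  rw [FracColoring.sum_filter_ofFamily_x, add_comm, Finset.sum_const, nsmul_eq_mul,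
    ← div_eq_mul_inv]
  gcongr

lemma le_fracChrom_arc (hs : 0 < s) (hst : s ≤ t) (hsα : s ≤ Fintype.card α) {p : ℝ}
    (hp : p = t / s) :
    (1 - s / Fintype.card α : ℝ) ^ (s + t) * ((p + 1) ^ (p + 1) / p ^ p) ≤
      fracChrom (underlying (Arc (α := α) (s := s) (t := t))) := by
  have hp₀ : 0 < p := by rw [hp]; have := hs.trans_le hst; positivity
  have hm : (0 : ℝ) < Fintype.card α := by exact_mod_cast hs.trans_le hsα
  have hdesc : (Fintype.card α - s) ^ s ≤ (Fintype.card α).descFactorial s :=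
    (Nat.pow_le_pow_left (by omega) s).trans (Nat.pow_sub_le_descFactorial _ _)
  have hcard : ((Fintype.card α - s) ^ (s + t) : ℝ) ≤ Fintype.card (TuplePair α s t) := by
    rw [card_eq, pow_add, ← Nat.cast_sub hsα]
    exact_mod_cast Nat.mul_le_mul_right _ hdesc
  refine le_trans ?_ (card_div_le_fracChrom (by positivity)
    fun A hA => card_le_of_isIndepF hs hst hA hp)
  rw [one_sub_div hm.ne', div_pow, ← inv_div (p ^ p), ← div_eq_mul_inv, div_div]
  gcongr

end TuplePair

end TuplePair

lemma exists_natCast_div_of_continuousAt {g : ℝ → ℝ} {p c : ℝ} (hp : 1 ≤ p)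
    (hg : ContinuousAt g p) (hc : c < g p) :
    ∃ s t : ℕ, 0 < s ∧ s ≤ t ∧ (t / s : ℝ) ≤ p ∧ c < g (t / s) := by
  have hp₀ : 0 ≤ p := zero_le_one.trans hp
  have hlim : Filter.Tendsto (fun s : ℕ => (⌊p * s⌋₊ / s : ℝ)) Filter.atTop (nhds p) :=
    (tendsto_nat_floor_mul_div_atTop hp₀).comp tendsto_natCast_atTop_atTop
  obtain ⟨s, hs, hcs⟩ := ((Filter.eventually_gt_atTop 0).and
    ((hg.tendsto.comp hlim).eventually_const_lt hc)).exists
  refine ⟨s, ⌊p * s⌋₊, hs, Nat.le_floor (le_mul_of_one_le_left s.cast_nonneg hp), ?_, hcs⟩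
  rw [div_le_iff₀ (by exact_mod_cast hs)]
  exact Nat.floor_le (by positivity)

lemma exists_fin_digraph_lt_fracChrom {p c : ℝ} (hp : 1 ≤ p)
    (hc : c < (p + 1) ^ (p + 1) / p ^ p) :
    ∃ (n : ℕ) (D : Fin n → Fin n → Prop), (∀ v, ¬ D v v) ∧ fracDirLocal D ≤ p + 1 ∧
      c < fracChrom (underlying D) := by
  have hp₀ : 0 < p := by linarith
  have hcont : ContinuousAt (fun x : ℝ => (x + 1) ^ (x + 1) / x ^ x) p := by
    refine ContinuousAt.div ?_ ?_ (by positivity)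
    · exact ContinuousAt.rpow (by fun_prop) (by fun_prop) (Or.inl (by positivity))
    · exact ContinuousAt.rpow (by fun_prop) (by fun_prop) (Or.inl hp₀.ne')
  obtain ⟨s, t, hs, hst, htp, hcr⟩ := exists_natCast_div_of_continuousAt hp hcont hc
  set r : ℝ := t / s with hr
  have hlim : Filter.Tendsto
      (fun m : ℕ => (1 - s / m : ℝ) ^ (s + t) * ((r + 1) ^ (r + 1) / r ^ r)) Filter.atTop
      (nhds ((r + 1) ^ (r + 1) / r ^ r)) := by
    simpa using (((tendsto_const_div_atTop_nhds_zero_nat (s : ℝ)).const_sub 1).pow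
      (s + t)).mul_const ((r + 1) ^ (r + 1) / r ^ r)
  obtain ⟨m, hm, hcm⟩ := ((Filter.eventually_ge_atTop s).and
    (hlim.eventually_const_lt hcr)).exists
  obtain ⟨n, D, hD, hlocal, hchrom⟩ :=
    exists_fin_digraph (TuplePair.not_arc_self (α := Fin m) (t := t) hs)
  refine ⟨n, D, hD, ?_, ?_⟩
  · exact hlocal.trans ((TuplePair.fracDirLocal_arc_le hs).trans (by linarith))
  · have hlower := TuplePair.le_fracChrom_arc (α := Fin m) hs hst (by simpa using hm) hr
    rw [Fintype.card_fin] at hlower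
    exact hcm.trans_le (hlower.trans hchrom)

/-- For every real `k ≥ 2`, the supremum of `χ*` over finite loopless digraphs with
`ψ_d* ≤ k` equals `k^k/(k-1)^(k-1)` (real powers): it is an upper bound, and it is
approached within any `ε > 0`. -/
theorem stmt10 (k : ℝ) (hk : 2 ≤ k) :
    (∀ (n : ℕ) (D : Fin n → Fin n → Prop), (∀ v, ¬ D v v) → fracDirLocal D ≤ k →
      fracChrom (underlying D) ≤ k ^ k / (k - 1) ^ (k - 1)) ∧
    (∀ ε : ℝ, 0 < ε → ∃ (n : ℕ) (D : Fin n → Fin n → Prop),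
      (∀ v, ¬ D v v) ∧ fracDirLocal D ≤ k ∧
      k ^ k / (k - 1) ^ (k - 1) - ε < fracChrom (underlying D)) := by
  obtain ⟨p, rfl⟩ : ∃ p, k = p + 1 := ⟨k - 1, (sub_add_cancel k 1).symm⟩
  have hp : 1 ≤ p := by linarith
  rw [add_sub_cancel_right]
  refine ⟨fun n D hD hlocal => ?_, fun ε hε => ?_⟩
  · exact fracChrom_le_of_fracDirLocal_le hD (zero_lt_one.trans_le hp) hlocal
  · exact exists_fin_digraph_lt_fracChrom hp (sub_lt_self _ hε)
end

section
/- For all integers m ≥ k ≥ 2, the directed local chromatic number of the digraph U_d(m,k) equals k: the natural coloring (c,H) ↦ c witnesses ψ_d(U_d(m,k)) ≤ k, and U_d(m,k) contains a complete directed subgraph (both arcs between any two of its vertices) on k vertices, which forces ψ_d(U_d(m,k)) ≥ k. -/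
/-!
The out-neighbors of `(c, H)` have first coordinates in `H`, so the natural coloring shows each
vertex at most `|H| = k - 1` colors. Conversely, all vertices of a complete directed subgraph get
different colors, so each of them sees `k - 1` colors on the others; the pairs `(x, T \ {x})` with
`x` in a fixed `k`-set `T` form such a subgraph.
-/

open Classical

/-- The directed local chromatic number `ψ_d(D)`: the minimum over proper colorings of the
underlying graph of `max_v |{c(u) : u ∈ N₊(v)}| + 1`. -/
noncomputable def dirLocalChrom {V : Type*} [Fintype V] (D : V → V → Prop) : ℕ :=
  sInf {n | ∃ c : V → ℕ, (∀ u v, (underlying D).Adj u v → c u ≠ c v) ∧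
    n = Finset.univ.sup (fun v => (c '' {u | D v u}).ncard) + 1}

/-- The vertex set of the digraph `U_d(m,k)`: pairs `(c,H)` with `c ∈ [m]`, `H ⊆ [m]`,
`|H| = k-1` and `c ∉ H`. -/
abbrev UdVert (m k : ℕ) := {p : Fin m × Finset (Fin m) // p.2.card = k - 1 ∧ p.1 ∉ p.2}

/-- The arc relation of `U_d(m,k)`: there is an arc from `(c,H)` to `(c',H')` iff `c' ∈ H`. -/
def UdArc (m k : ℕ) (u v : UdVert m k) : Prop := v.1.1 ∈ u.1.2

section DirLocalChrom

variable {V : Type*} {D : V → V → Prop}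

theorem isClique_underlying {S : Set V} (hS : S.Pairwise D) : (underlying D).IsClique S :=
  fun _ hu _ hv huv ↦ (SimpleGraph.fromRel_adj D _ _).2 ⟨huv, Or.inl (hS hu hv huv)⟩

variable [Fintype V]

theorem dirLocalChrom_le_of_coloring {α : Type*} {n : ℕ} (c : (underlying D).Coloring α)
    (hc : ∀ v, (c '' {u | D v u}).ncard ≤ n) : dirLocalChrom D ≤ n + 1 := by
  obtain ⟨f, hf⟩ := Set.countable_iff_exists_injOn.1 (Set.finite_range c).countable
  have proper : ∀ u v, (underlying D).Adj u v → f (c u) ≠ f (c v) := fun u v huv h ↦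
    c.valid huv (hf (Set.mem_range_self u) (Set.mem_range_self v) h)
  have ncard_le : ∀ v, (f ∘ c '' {u | D v u}).ncard ≤ n := fun v ↦ by
    rw [Set.image_comp]
    exact (Set.ncard_image_le (Set.toFinite _)).trans (hc v)
  calc dirLocalChrom D
    _ ≤ Finset.univ.sup (fun v ↦ (f ∘ c '' {u | D v u}).ncard) + 1 :=
      Nat.sInf_le ⟨f ∘ c, proper, rfl⟩
    _ ≤ n + 1 := Nat.add_le_add_right (Finset.sup_le fun v _ ↦ ncard_le v) 1

variable (D) in
theorem exists_coloring_forall_ncard_lt_dirLocalChrom :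
    ∃ c : (underlying D).Coloring ℕ, ∀ v, (c '' {u | D v u}).ncard < dirLocalChrom D := by
  obtain ⟨f, hf⟩ := Countable.exists_injective_nat V
  obtain ⟨c, proper, h⟩ : dirLocalChrom D ∈ _ :=
    Nat.sInf_mem ⟨_, f, fun _ _ huv ↦ hf.ne huv.ne, rfl⟩
  refine ⟨.mk c (proper _ _), fun v ↦ ?_⟩
  rw [h]
  exact Nat.lt_succ_of_le
    (Finset.le_sup (f := fun v ↦ (c '' {u | D v u}).ncard) (Finset.mem_univ v))

theorem card_le_dirLocalChrom {S : Finset V} (hS : (S : Set V).Pairwise D) :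
    S.card ≤ dirLocalChrom D := by
  obtain rfl | ⟨v, hv⟩ := S.eq_empty_or_nonempty
  · exact Nat.zero_le _
  obtain ⟨c, hc⟩ := exists_coloring_forall_ncard_lt_dirLocalChrom D
  have c_injOn : Set.InjOn c S := fun u hu w hw h ↦
    by_contra fun huw ↦ c.valid (isClique_underlying hS hu hw huw) h
  have subset_out : (S : Set V) \ {v} ⊆ {u | D v u} := fun u hu ↦ hS hv hu.1 (Ne.symm hu.2)
  have card_pred_lt : S.card - 1 < dirLocalChrom D :=
    calc S.card - 1
      _ = ((S : Set V) \ {v}).ncard := by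
        rw [Set.ncard_sdiff_singleton_of_mem hv, Set.ncard_coe_finset]
      _ = (c '' ((S : Set V) \ {v})).ncard :=
        (c_injOn.mono Set.sdiff_subset).ncard_image.symm
      _ ≤ (c '' {u | D v u}).ncard :=
        Set.ncard_le_ncard (Set.image_mono subset_out) (Set.toFinite _)
      _ < dirLocalChrom D := hc v
  exact Nat.le_of_pred_lt card_pred_lt

end DirLocalChrom

namespace UdVert

variable {m k : ℕ}

/-- The natural coloring `(c, H) ↦ c` of `U_d(m, k)`, as a proper coloring of the underlying
graph with color set `[m]`. -/
def naturalColoring (m k : ℕ) : (underlying (UdArc m k)).Coloring (Fin m) :=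
  .mk (fun v ↦ v.1.1) fun {u v} huv h ↦ by
    obtain ⟨-, hu | hv⟩ := (SimpleGraph.fromRel_adj _ _ _).1 huv
    · exact u.2.2 (h ▸ hu)
    · exact v.2.2 (h ▸ hv)

theorem ncard_naturalColoring_image_le (v : UdVert m k) :
    (naturalColoring m k '' {u | UdArc m k v u}).ncard ≤ k - 1 := by
  have image_subset : naturalColoring m k '' {u | UdArc m k v u} ⊆ v.1.2 :=
    Set.image_subset_iff.2 fun _ hu ↦ hu
  calc (naturalColoring m k '' {u | UdArc m k v u}).ncard
    _ ≤ (v.1.2 : Set (Fin m)).ncard := Set.ncard_le_ncard image_subset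
    _ = k - 1 := by rw [Set.ncard_coe_finset, v.2.1]

/-- The vertex `(x, T \ {x})` of `U_d(m, k)` given by an element `x` of a `k`-set `T`; for fixed
`T` these vertices span a complete directed subgraph. -/
def ofMem {T : Finset (Fin m)} (hT : T.card = k) (x : T) : UdVert m k :=
  ⟨(x, T.erase x), by rw [Finset.card_erase_of_mem x.2, hT], Finset.notMem_erase _ _⟩

theorem ofMem_injective {T : Finset (Fin m)} (hT : T.card = k) :
    Function.Injective (ofMem hT) :=
  fun _ _ h ↦ Subtype.ext (congrArg (fun v : UdVert m k ↦ v.1.1) h)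

theorem udArc_ofMem {T : Finset (Fin m)} (hT : T.card = k) {x y : T} (hxy : x ≠ y) :
    UdArc m k (ofMem hT x) (ofMem hT y) :=
  Finset.mem_erase.2 ⟨Subtype.coe_ne_coe.2 hxy.symm, y.2⟩

end UdVert

open UdVert

theorem exists_card_eq_pairwise_udArc {m k : ℕ} (hkm : k ≤ m) :
    ∃ S : Finset (UdVert m k), S.card = k ∧ (S : Set (UdVert m k)).Pairwise (UdArc m k) := by
  obtain ⟨T, -, hT⟩ := Finset.exists_subset_card_eq (hkm.trans_eq (Finset.card_fin m).symm)
  refine ⟨Finset.univ.map ⟨ofMem hT, ofMem_injective hT⟩, by simp [hT], ?_⟩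
  rintro u hu v hv huv
  obtain ⟨x, -, rfl⟩ := Finset.mem_map.1 hu
  obtain ⟨y, -, rfl⟩ := Finset.mem_map.1 hv
  exact udArc_ofMem hT (ne_of_apply_ne _ huv)

theorem dirLocalChrom_udArc {m k : ℕ} (hk : 0 < k) (hkm : k ≤ m) :
    dirLocalChrom (UdArc m k) = k := by
  apply le_antisymm
  · calc dirLocalChrom (UdArc m k)
      _ ≤ k - 1 + 1 :=
        dirLocalChrom_le_of_coloring (naturalColoring m k) ncard_naturalColoring_image_le
      _ = k := Nat.sub_add_cancel hk
  · obtain ⟨S, card_S, hS⟩ := exists_card_eq_pairwise_udArc hkm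
    exact card_S.ge.trans (card_le_dirLocalChrom hS)

/-- For `m ≥ k ≥ 2`, `ψ_d(U_d(m,k)) = k`; moreover the natural coloring `(c,H) ↦ c` is a
proper coloring whose out-neighborhoods see at most `k - 1` colors (witnessing `ψ_d ≤ k`),
and `U_d(m,k)` contains a complete directed subgraph on `k` vertices (forcing `ψ_d ≥ k`). -/
theorem stmt14 (m k : ℕ) (hk : 2 ≤ k) (hm : k ≤ m) :
    dirLocalChrom (UdArc m k) = k ∧
    ((∀ u v : UdVert m k, (underlying (UdArc m k)).Adj u v → u.1.1 ≠ v.1.1) ∧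
      ∀ v : UdVert m k,
        ((fun w : UdVert m k => w.1.1) '' {u | UdArc m k v u}).ncard + 1 ≤ k) ∧
    ∃ S : Finset (UdVert m k), S.card = k ∧
      ∀ u ∈ S, ∀ v ∈ S, u ≠ v → UdArc m k u v ∧ UdArc m k v u := by
  have k_pos : 0 < k := by lia
  obtain ⟨S, card_S, hS⟩ := exists_card_eq_pairwise_udArc hm
  exact ⟨dirLocalChrom_udArc k_pos hm,
    ⟨fun _ _ huv ↦ (naturalColoring m k).valid huv,
      fun v ↦ Nat.add_le_of_le_sub k_pos (ncard_naturalColoring_image_le v)⟩,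
    S, card_S, fun _ hu _ hv huv ↦ ⟨hS hu hv huv, hS hv hu huv.symm⟩⟩
end

section
/- Let m ≥ k ≥ 2 be integers and let I be an independent set of the underlying undirected graph of U_d(m,k). Let C' = {c ∈ [m] : (c,H) ∈ I for some H}. Then every vertex (c,H) ∈ I satisfies c ∈ C' and H ∩ C' = ∅; consequently, writing l = m − |C'|, one has |I| ≤ (m−l)·binom(l, k−1), and hence the independence number of U_d(m,k) is at most max_{0 ≤ l ≤ m} (m−l)·binom(l, k−1). -/
open Classical

theorem not_rel_of_isIndepSet_underlying {V : Type*} {D : V → V → Prop} {s : Set V}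
    (hD : ∀ v, ¬ D v v) (hs : (underlying D).IsIndepSet s) {u v : V} (hu : u ∈ s) (hv : v ∈ s) :
    ¬ D u v := by
  intro huv
  have hne : u ≠ v := by
    rintro rfl
    exact hD u huv
  exact hs hu hv hne ((SimpleGraph.fromRel_adj D u v).2 ⟨hne, Or.inl huv⟩)

theorem UdVert.fst_notMem_snd_of_isIndepSet {m k : ℕ} {s : Set (UdVert m k)}
    (hs : (underlying (UdArc m k)).IsIndepSet s) {u v : UdVert m k} (hu : u ∈ s) (hv : v ∈ s) :
    v.1.1 ∉ u.1.2 :=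
  not_rel_of_isIndepSet_underlying (D := UdArc m k) (fun w => w.2.2) hs hu hv

section PairCounting

open Finset

variable {ι α : Type*} [Fintype α] {s : Finset ι} {f : ι → α} {H : ι → Finset α}
  {r : ℕ}

theorem card_le_card_image_mul_choose_of_forall_notMem [DecidableEq α]
    (hinj : Set.InjOn (fun i => (f i, H i)) s) (hcard : ∀ i ∈ s, #(H i) = r)
    (hfH : ∀ i ∈ s, ∀ j ∈ s, f j ∉ H i) :
    #s ≤ #(s.image f) * (Fintype.card α - #(s.image f)).choose r := by
  have hsub : ∀ i ∈ s, H i ⊆ (s.image f)ᶜ := by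
    intro i hi
    rw [subset_compl_comm, image_subset_iff]
    exact fun j hj => mem_compl.2 (hfH i hi j hj)
  have hmaps : ∀ i ∈ s, (f i, H i) ∈ s.image f ×ˢ (s.image f)ᶜ.powersetCard r := fun i hi =>
    mk_mem_product (mem_image_of_mem f hi) (mem_powersetCard.2 ⟨hsub i hi, hcard i hi⟩)
  calc #s ≤ #(s.image f ×ˢ (s.image f)ᶜ.powersetCard r) := card_le_card_of_injOn _ hmaps hinj
    _ = #(s.image f) * (Fintype.card α - #(s.image f)).choose r := by
      rw [card_product, card_powersetCard, card_compl]

theorem card_le_sup_mul_choose_of_forall_notMem (hinj : Set.InjOn (fun i => (f i, H i)) s)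
    (hcard : ∀ i ∈ s, #(H i) = r) (hfH : ∀ i ∈ s, ∀ j ∈ s, f j ∉ H i) :
    #s ≤ (range (Fintype.card α + 1)).sup fun l => (Fintype.card α - l) * l.choose r := by
  classical
  have hmem : Fintype.card α - #(s.image f) ∈ range (Fintype.card α + 1) :=
    mem_range_succ_iff.2 (Nat.sub_le _ _)
  calc #s ≤ #(s.image f) * (Fintype.card α - #(s.image f)).choose r :=
        card_le_card_image_mul_choose_of_forall_notMem hinj hcard hfH
    _ = (Fintype.card α - (Fintype.card α - #(s.image f))) *
        (Fintype.card α - #(s.image f)).choose r := by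
      rw [Nat.sub_sub_self (card_le_univ _)]
    _ ≤ _ := le_sup (f := fun l => (Fintype.card α - l) * l.choose r) hmem

end PairCounting

/-- Let `I` be an independent set of `U_d(m,k)` (no arc in either direction between two of
its vertices) and `C'` the set of first coordinates of members of `I`. Then every `(c,H) ∈ I`
has `c ∈ C'` and `H ∩ C' = ∅`; consequently, with `l = m - |C'|`,
`|I| ≤ (m-l)·C(l,k-1)`, and hence every independent set has size at most
`max_{0 ≤ l ≤ m} (m-l)·C(l,k-1)`. -/
theorem stmt15 (m k : ℕ) (hk : 2 ≤ k) (hm : k ≤ m)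
    (I : Finset (UdVert m k))
    (hI : ∀ u ∈ I, ∀ v ∈ I, ¬ (underlying (UdArc m k)).Adj u v) :
    (∀ v ∈ I, v.1.1 ∈ I.image (fun w : UdVert m k => w.1.1) ∧
      ∀ c ∈ I.image (fun w : UdVert m k => w.1.1), c ∉ v.1.2) ∧
    I.card ≤ (m - (m - (I.image (fun w : UdVert m k => w.1.1)).card)) *
      Nat.choose (m - (I.image (fun w : UdVert m k => w.1.1)).card) (k - 1) ∧
    (∀ J : Finset (UdVert m k),
      (∀ u ∈ J, ∀ v ∈ J, ¬ (underlying (UdArc m k)).Adj u v) →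
      J.card ≤ (Finset.range (m + 1)).sup (fun l => (m - l) * Nat.choose l (k - 1))) := by
  have hnotMem (J : Finset (UdVert m k))
      (hJ : ∀ u ∈ J, ∀ v ∈ J, ¬ (underlying (UdArc m k)).Adj u v) :
      ∀ u ∈ J, ∀ v ∈ J, v.1.1 ∉ u.1.2 := by
    have hindep : (underlying (UdArc m k)).IsIndepSet J := fun u hu v hv _ => hJ u hu v hv
    exact fun u hu v hv => UdVert.fst_notMem_snd_of_isIndepSet hindep hu hv
  refine ⟨fun v hv => ⟨Finset.mem_image_of_mem _ hv, ?_⟩, ?_, fun J hJ => ?_⟩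
  · exact Finset.forall_mem_image.2 (hnotMem I hI v hv)
  · have hle : (I.image fun w : UdVert m k => w.1.1).card ≤ m := card_finset_fin_le _
    rw [Nat.sub_sub_self hle]
    simpa only [Fintype.card_fin] using
      card_le_card_image_mul_choose_of_forall_notMem Subtype.val_injective.injOn
        (fun v _ => v.2.1) (hnotMem I hI)
  · simpa only [Fintype.card_fin] using
      card_le_sup_mul_choose_of_forall_notMem Subtype.val_injective.injOn
        (fun v _ => v.2.1) (hnotMem J hJ)
end

section
/- For all integers m ≥ k ≥ 2, the fractional chromatic number of the underlying undirected graph of U_d(m,k) satisfies χ*(U_d(m,k)) ≥ (1 − 1/m)^{k−1} · k^k/(k−1)^{k−1}. -/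
open Classical

/-! Every graph satisfies `|V| / α ≤ χ*`. In an independent set of `U_d(m,k)`, no vertex has its
color in the set `H` of another one, so if the independent set uses exactly `s` colors, then its
sets `H` avoid all of them and it has at most `s * (m - s).choose (k - 1)` vertices. The ratio
`(m - s).choose (k - 1) / (m - 1).choose (k - 1)` is at most `((m - s) / (m - 1)) ^ (k - 1)`, and
by AM-GM the product `s * (m - s) ^ (k - 1)` is largest at `s = m / k`. -/

section Inequalities

-- AM-GM for `a` and `n` copies of `b`, as Bernoulli's inequality for the sum of `(n + 1) * b` and
-- `a - b`.
lemma pow_mul_mul_pow_le_add_mul_pow {R : Type*} [CommRing R] [LinearOrder R]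
    [IsStrictOrderedRing R] {a b : R} (ha : 0 ≤ a) (hb : 0 ≤ b) (n : ℕ) :
    ((n : R) + 1) ^ (n + 1) * (a * b ^ n) ≤ (a + n * b) ^ (n + 1) := by
  have hnb : 0 ≤ n * b := by positivity
  calc ((n : R) + 1) ^ (n + 1) * (a * b ^ n)
      = ((n + 1) * b) ^ (n + 1) + (n + 1 : ℕ) * ((n + 1) * b) ^ (n + 1 - 1) * (a - b) := by
        rw [Nat.add_sub_cancel, Nat.cast_add_one, mul_pow, mul_pow]
        ring
    _ ≤ ((n + 1) * b + (a - b)) ^ (n + 1) :=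
        pow_add_mul_le_add_pow (by positivity) (by linarith) _
    _ = (a + n * b) ^ (n + 1) := by ring

lemma succ_pow_mul_mul_pow_le (s t n : ℕ) :
    (n + 1) ^ (n + 1) * (s * t ^ n) ≤ n ^ n * (s + t) ^ (n + 1) := by
  rcases n.eq_zero_or_pos with rfl | hn
  · simp
  have amgm : (n + 1) ^ (n + 1) * (n * s * t ^ n) ≤ (n * s + n * t) ^ (n + 1) := by
    exact_mod_cast pow_mul_mul_pow_le_add_mul_pow (R := ℤ) (a := n * s) (b := t)
      (by positivity) (by positivity) n
  refine Nat.le_of_mul_le_mul_left ?_ hn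
  calc n * ((n + 1) ^ (n + 1) * (s * t ^ n)) = (n + 1) ^ (n + 1) * (n * s * t ^ n) := by ring
    _ ≤ (n * s + n * t) ^ (n + 1) := amgm
    _ = n * (n ^ n * (s + t) ^ (n + 1)) := by rw [← mul_add, mul_pow]; ring

lemma descFactorial_mul_pow_le {a b : ℕ} (h : a ≤ b) (r : ℕ) :
    a.descFactorial r * b ^ r ≤ b.descFactorial r * a ^ r := by
  induction r with
  | zero => simp
  | succ r ih =>
    have hstep : (a - r) * b ≤ (b - r) * a := by
      rw [Nat.sub_mul, Nat.sub_mul, mul_comm b a]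
      gcongr
    calc a.descFactorial (r + 1) * b ^ (r + 1)
        = ((a - r) * b) * (a.descFactorial r * b ^ r) := by rw [Nat.descFactorial_succ]; ring
      _ ≤ ((b - r) * a) * (b.descFactorial r * a ^ r) := Nat.mul_le_mul hstep ih
      _ = b.descFactorial (r + 1) * a ^ (r + 1) := by rw [Nat.descFactorial_succ]; ring

lemma choose_mul_pow_le {a b : ℕ} (h : a ≤ b) (r : ℕ) :
    a.choose r * b ^ r ≤ b.choose r * a ^ r := by
  have hdesc := descFactorial_mul_pow_le h r
  rw [Nat.descFactorial_eq_factorial_mul_choose, Nat.descFactorial_eq_factorial_mul_choose,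
    mul_assoc, mul_assoc] at hdesc
  exact Nat.le_of_mul_le_mul_left hdesc r.factorial_pos

lemma pow_mul_mul_choose_le {m s : ℕ} (hsm : s ≤ m) (n : ℕ) :
    (m - 1) ^ n * (n + 1) ^ (n + 1) * (s * (m - s).choose n) ≤
      (m * n) ^ n * (m * (m - 1).choose n) := by
  rcases s.eq_zero_or_pos with rfl | hs
  · simp
  calc (m - 1) ^ n * (n + 1) ^ (n + 1) * (s * (m - s).choose n)
      = (n + 1) ^ (n + 1) * s * ((m - s).choose n * (m - 1) ^ n) := by ring
    _ ≤ (n + 1) ^ (n + 1) * s * ((m - 1).choose n * (m - s) ^ n) := by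
        gcongr _ * ?_
        exact choose_mul_pow_le (Nat.sub_le_sub_left hs m) n
    _ = (n + 1) ^ (n + 1) * (s * (m - s) ^ n) * (m - 1).choose n := by ring
    _ ≤ n ^ n * (s + (m - s)) ^ (n + 1) * (m - 1).choose n := by
        gcongr ?_ * _
        exact succ_pow_mul_mul_pow_le s (m - s) n
    _ = (m * n) ^ n * (m * (m - 1).choose n) := by
        rw [Nat.add_sub_cancel' hsm]
        ring

end Inequalities

section FractionalColoring

variable {V : Type*}

lemma isIndepF_iff_isIndepSet {G : SimpleGraph V} {A : Finset V} :
    IsIndepF G A ↔ G.IsIndepSet A :=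
  ⟨fun h _ hu _ hv _ => h _ hu _ hv, fun h _ hu _ hv huv => h hu hv huv.ne huv⟩

lemma indepNum_pos [Finite V] [Nonempty V] (G : SimpleGraph V) : 0 < G.indepNum := by
  obtain ⟨v⟩ := ‹Nonempty V›
  have hv : G.IsIndepSet ({v} : Finset V) := by simp
  exact hv.card_le_indepNum

variable [Fintype V] {G : SimpleGraph V}

/-- The fractional coloring that gives weight `1` to every one-element set of vertices. It shows
that `fracChrom` is an infimum over a nonempty set, hence not a junk value of `sInf`. -/
def FracColoring.singletons (G : SimpleGraph V) : FracColoring G where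
  x A := if A.card = 1 then 1 else 0
  nonneg A := by positivity
  supp A hA := by
    obtain ⟨a, rfl⟩ := Finset.card_eq_one.mp (ite_ne_right_iff.mp hA).1
    simp [isIndepF_iff_isIndepSet]
  cover v := by
    refine le_of_eq_of_le ?_
      (Finset.single_le_sum (fun A _ => by positivity) (Finset.mem_univ {v}))
    simp

lemma totalWeight_nonneg (f : FracColoring G) : 0 ≤ totalWeight f :=
  Finset.sum_nonneg fun A _ => f.nonneg A

lemma card_le_sum_card_mul (f : FracColoring G) :
    (Fintype.card V : ℝ) ≤ ∑ A : Finset V, A.card * f.x A := by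
  calc (Fintype.card V : ℝ) = ∑ _v : V, (1 : ℝ) := by simp
    _ ≤ ∑ v : V, ∑ A : Finset V, (if v ∈ A then f.x A else 0) :=
        Finset.sum_le_sum fun v _ => f.cover v
    _ = ∑ A : Finset V, ∑ v : V, (if v ∈ A then f.x A else 0) := Finset.sum_comm
    _ = ∑ A : Finset V, A.card * f.x A := by simp [Finset.sum_ite_mem]

lemma card_le_totalWeight_mul_indepNum (f : FracColoring G) :
    (Fintype.card V : ℝ) ≤ totalWeight f * G.indepNum := by
  refine (card_le_sum_card_mul f).trans ?_
  rw [totalWeight, Finset.sum_mul]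
  refine Finset.sum_le_sum fun A _ => ?_
  rw [mul_comm]
  by_cases hA : f.x A = 0
  · simp [hA]
  · have hcard := (isIndepF_iff_isIndepSet.mp (f.supp A hA)).card_le_indepNum
    exact mul_le_mul_of_nonneg_left (mod_cast hcard) (f.nonneg A)

theorem card_div_indepNum_le_fracChrom (G : SimpleGraph V) :
    (Fintype.card V : ℝ) / G.indepNum ≤ fracChrom G := by
  refine le_csInf ⟨_, FracColoring.singletons G, rfl⟩ ?_
  rintro _ ⟨f, rfl⟩
  exact div_le_of_le_mul₀ (Nat.cast_nonneg _) (totalWeight_nonneg f)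
    (card_le_totalWeight_mul_indepNum f)

end FractionalColoring

section UniversalDigraph

variable {m k : ℕ}

lemma card_udVert (m k : ℕ) : Fintype.card (UdVert m k) = m * (m - 1).choose (k - 1) := by
  have card_fiber (c : Fin m) :
      Fintype.card {H : Finset (Fin m) // H.card = k - 1 ∧ c ∉ H} = (m - 1).choose (k - 1) := by
    rw [Fintype.card_of_subtype (Finset.powersetCard (k - 1) ({c}ᶜ : Finset (Fin m)))
      fun H => by rw [Finset.mem_powersetCard, Finset.subset_compl_singleton, and_comm]]
    simp [Finset.card_compl]
  rw [Fintype.card_congr (Equiv.subtypeProdEquivSigmaSubtype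
    fun (c : Fin m) (H : Finset (Fin m)) => H.card = k - 1 ∧ c ∉ H), Fintype.card_sigma]
  simp [card_fiber]

lemma color_notMem_of_isIndepSet {A : Set (UdVert m k)}
    (hA : (underlying (UdArc m k)).IsIndepSet A) {u v : UdVert m k} (hu : u ∈ A) (hv : v ∈ A) :
    u.1.1 ∉ v.1.2 := by
  intro harc
  have hne : v ≠ u := by
    rintro rfl
    exact v.2.2 harc
  exact hA hv hu hne ((SimpleGraph.fromRel_adj _ _ _).mpr ⟨hne, Or.inl harc⟩)

lemma card_le_card_colors_mul_choose {A : Finset (UdVert m k)}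
    (hA : (underlying (UdArc m k)).IsIndepSet A) :
    A.card ≤ (A.image (·.1.1)).card * (m - (A.image (·.1.1)).card).choose (k - 1) := by
  set C : Finset (Fin m) := A.image (·.1.1)
  calc A.card ≤ (C ×ˢ Finset.powersetCard (k - 1) Cᶜ).card := by
        refine Finset.card_le_card_of_injOn Subtype.val (fun v hv => ?_) Subtype.val_injective.injOn
        refine Finset.mem_product.mpr ⟨Finset.mem_image_of_mem _ hv,
          Finset.mem_powersetCard.mpr ⟨fun c hc => Finset.mem_compl.mpr fun hcC => ?_, v.2.1⟩⟩
        obtain ⟨u, hu, rfl⟩ := Finset.mem_image.mp hcC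
        exact color_notMem_of_isIndepSet hA hu hv hc
    _ = C.card * (m - C.card).choose (k - 1) := by
        rw [Finset.card_product, Finset.card_powersetCard, Finset.card_compl, Fintype.card_fin]

lemma exists_indepNum_le_mul_choose (m k : ℕ) :
    ∃ s ≤ m, (underlying (UdArc m k)).indepNum ≤ s * (m - s).choose (k - 1) := by
  obtain ⟨A, hA⟩ := (underlying (UdArc m k)).exists_isNIndepSet_indepNum
  refine ⟨(A.image (·.1.1)).card, ?_, ?_⟩
  · simpa using (A.image (·.1.1)).card_le_univ
  · rw [← hA.card_eq]
    exact card_le_card_colors_mul_choose hA.isIndepSet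

lemma pow_mul_indepNum_le_pow_mul_card (m n : ℕ) :
    (m - 1) ^ n * (n + 1) ^ (n + 1) * (underlying (UdArc m (n + 1))).indepNum ≤
      (m * n) ^ n * Fintype.card (UdVert m (n + 1)) := by
  obtain ⟨s, hsm, hs⟩ := exists_indepNum_le_mul_choose m (n + 1)
  rw [card_udVert]
  exact (Nat.mul_le_mul_left _ hs).trans (pow_mul_mul_choose_le hsm n)

lemma nonempty_udVert (hk : 1 ≤ k) (hm : k ≤ m) : Nonempty (UdVert m k) := by
  rw [← Fintype.card_pos_iff, card_udVert]
  exact Nat.mul_pos (by omega) (Nat.choose_pos (by omega))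

end UniversalDigraph

/-- For `m ≥ k ≥ 2`, the fractional chromatic number of (the underlying undirected graph of)
`U_d(m,k)` is at least `(1 - 1/m)^(k-1) · k^k/(k-1)^(k-1)`. -/
theorem stmt16 (m k : ℕ) (hk : 2 ≤ k) (hm : k ≤ m) :
    (1 - 1 / (m : ℝ)) ^ (k - 1) * ((k : ℝ) ^ k / ((k : ℝ) - 1) ^ (k - 1)) ≤
      fracChrom (underlying (UdArc m k)) := by
  obtain ⟨n, rfl⟩ : ∃ n, k = n + 1 := ⟨k - 1, by omega⟩
  have := nonempty_udVert (by omega) hm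
  have hα := indepNum_pos (underlying (UdArc m (n + 1)))
  have hn0 : (0 : ℝ) < n := by norm_cast; omega
  have hm0 : (0 : ℝ) < m := by norm_cast; omega
  calc (1 - 1 / (m : ℝ)) ^ n * (((n + 1 : ℕ) : ℝ) ^ (n + 1) / (((n + 1 : ℕ) : ℝ) - 1) ^ n)
      = ((m - 1 : ℕ) ^ n * (n + 1) ^ (n + 1) : ℝ) / (m * n) ^ n := by
        rw [one_sub_div hm0.ne', Nat.cast_pred (by omega), Nat.cast_add_one, add_sub_cancel_right,
          div_pow, div_mul_div_comm, mul_pow]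
    _ ≤ Fintype.card (UdVert m (n + 1)) / (underlying (UdArc m (n + 1))).indepNum := by
        rw [div_le_div_iff₀ (by positivity) (by positivity), mul_comm (Fintype.card _ : ℝ)]
        exact_mod_cast pow_mul_indepNum_le_pow_mul_card m n
    _ ≤ fracChrom (underlying (UdArc m (n + 1))) := card_div_indepNum_le_fracChrom _
end
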